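/- arXiv:1401.3598 — 8 statements merged into one kernel-verified Lean document; each statement's English description precedes it below -/
import Mathlib

section
/- Let ψ = ψ_cyl be the cylinder potential and let τ : ℝ → ℝ be smooth with τ > 0 and τ' > 0. Then at every point p = (a, b, z) ∈ ℝ × ℝ × ℂⁿ the almost complex structure J is compatible with the symplectic form ω = d(τα): for all u₁, u₂, u ∈ ℝ × ℝ × ℂⁿ one has ω_p(J_z u₁, J_z u₂) = ω_p(u₁, u₂), and ω_p(u, J_z u) > 0 whenever u ≠ 0. -/
/-!
Write `θ(β, v) = β + λ_z(v)` for the contact form. Since `λ_z(v) = -dψ_z(i v)` and `i² = -1`, the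
linearity of `dψ_z` shows that `J` exchanges the two coordinates `α` and `θ` by a quarter turn,
`(α, θ) ↦ (-θ, α)` (`Jcyl_fst`, `Jcyl_contact`), and that it acts as multiplication by `i` on `v`.
As `ω = τ' · α ∧ θ + τ · σ`, it is `J`-invariant because quarter turns preserve area forms, and
`ω(u, Ju) = τ' (α² + θ²) + τ |v|²`, which is positive definite since `τ, τ' > 0`.
Only the linearity of `dψ_z` enters, not the formula for the cylinder potential.
-/

open Complex

/-- The cylinder potential `ψ_cyl(z₀, z₁, …, z_{n−1}) = |z₀|²/4 + ½·Σ_j (Im z_j)²`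
on `ℂ × ℂ^{n−1}` (here `m = n − 1`). -/
noncomputable def psiCyl (m : ℕ) (z : ℂ × (Fin m → ℂ)) : ℝ :=
  Complex.normSq z.1 / 4 + (1 / 2) * ∑ j, (z.2 j).im ^ 2

/-- The almost complex structure `J` on `ℝ × ℝ × (ℂ × ℂ^{n−1})` associated with
the cylinder potential: `J_z (α, β, v) = (dψ_z(i·v) − β, α − dψ_z(v), i·v)`. -/
noncomputable def Jcyl (m : ℕ) (z : ℂ × (Fin m → ℂ))
    (q : ℝ × ℝ × (ℂ × (Fin m → ℂ))) : ℝ × ℝ × (ℂ × (Fin m → ℂ)) :=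
  (fderiv ℝ (psiCyl m) z (Complex.I • q.2.2) - q.2.1,
   q.1 - fderiv ℝ (psiCyl m) z q.2.2,
   Complex.I • q.2.2)

/-- The Liouville form `λ_z(v) = −dψ_z(i·v)`. -/
noncomputable def lamCyl (m : ℕ) (z : ℂ × (Fin m → ℂ)) (v : ℂ × (Fin m → ℂ)) : ℝ :=
  -(fderiv ℝ (psiCyl m) z (Complex.I • v))

/-- The standard symplectic pairing `σ(v,w) = Σ_k (Re v_k · Im w_k − Im v_k · Re w_k)`
on `ℂ × ℂ^{n−1}`. -/
noncomputable def sigmaCyl (m : ℕ) (v w : ℂ × (Fin m → ℂ)) : ℝ :=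
  (v.1.re * w.1.im - v.1.im * w.1.re) +
    ∑ k, ((v.2 k).re * (w.2 k).im - (v.2 k).im * (w.2 k).re)

/-- The symplectic form `ω = d(τα)` of the symplectisation at the point with
`ℝ`-coordinate `a` and `ℂⁿ`-coordinate `z`. -/
noncomputable def omegaCyl (m : ℕ) (τ : ℝ → ℝ) (a : ℝ) (z : ℂ × (Fin m → ℂ))
    (u₁ u₂ : ℝ × ℝ × (ℂ × (Fin m → ℂ))) : ℝ :=
  deriv τ a * (u₁.1 * (u₂.2.1 + lamCyl m z u₂.2.2)
      - u₂.1 * (u₁.2.1 + lamCyl m z u₁.2.2))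
    + τ a * sigmaCyl m u₁.2.2 u₂.2.2

theorem Jcyl_fst (m : ℕ) (z : ℂ × (Fin m → ℂ)) (u : ℝ × ℝ × (ℂ × (Fin m → ℂ))) :
    (Jcyl m z u).1 = -(u.2.1 + lamCyl m z u.2.2) := by
  simp only [Jcyl, lamCyl]
  ring

theorem Jcyl_contact (m : ℕ) (z : ℂ × (Fin m → ℂ)) (u : ℝ × ℝ × (ℂ × (Fin m → ℂ))) :
    (Jcyl m z u).2.1 + lamCyl m z (Jcyl m z u).2.2 = u.1 := by
  have h : Complex.I • (Complex.I • u.2.2) = -u.2.2 := by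
    rw [smul_smul, Complex.I_mul_I, neg_one_smul]
  simp only [Jcyl, lamCyl]
  rw [h, map_neg]
  ring

theorem sigmaCyl_I_smul (m : ℕ) (v w : ℂ × (Fin m → ℂ)) :
    sigmaCyl m (Complex.I • v) (Complex.I • w) = sigmaCyl m v w := by
  simp only [sigmaCyl, Prod.smul_fst, Prod.smul_snd, Pi.smul_apply, smul_eq_mul,
    Complex.I_mul_re, Complex.I_mul_im]
  congr 1
  · ring
  · exact Finset.sum_congr rfl fun k _ => by ring

theorem sigmaCyl_self_I_smul (m : ℕ) (v : ℂ × (Fin m → ℂ)) :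
    sigmaCyl m v (Complex.I • v) = Complex.normSq v.1 + ∑ k, Complex.normSq (v.2 k) := by
  simp only [sigmaCyl, Prod.smul_fst, Prod.smul_snd, Pi.smul_apply, smul_eq_mul,
    Complex.I_mul_re, Complex.I_mul_im, Complex.normSq_apply]
  congr 1
  · ring
  · exact Finset.sum_congr rfl fun k _ => by ring

theorem sigmaCyl_self_I_smul_nonneg (m : ℕ) (v : ℂ × (Fin m → ℂ)) :
    0 ≤ sigmaCyl m v (Complex.I • v) := by
  rw [sigmaCyl_self_I_smul]
  exact add_nonneg (Complex.normSq_nonneg _)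
    (Finset.sum_nonneg fun _ _ => Complex.normSq_nonneg _)

theorem sigmaCyl_self_I_smul_pos (m : ℕ) {v : ℂ × (Fin m → ℂ)} (hv : v ≠ 0) :
    0 < sigmaCyl m v (Complex.I • v) := by
  refine lt_of_le_of_ne (sigmaCyl_self_I_smul_nonneg m v) fun h => hv ?_
  rw [sigmaCyl_self_I_smul, eq_comm, add_eq_zero_iff_of_nonneg (Complex.normSq_nonneg _)
    (Finset.sum_nonneg fun _ _ => Complex.normSq_nonneg _),
    Finset.sum_eq_zero_iff_of_nonneg fun _ _ => Complex.normSq_nonneg _] at h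
  refine Prod.ext (Complex.normSq_eq_zero.mp h.1) (funext fun k => ?_)
  exact Complex.normSq_eq_zero.mp (h.2 k (Finset.mem_univ k))

/-- At every point `p = (a, b, z)`, the almost complex structure `J` is compatible
with `ω = d(τα)`: `ω(Ju₁, Ju₂) = ω(u₁, u₂)` and `ω(u, Ju) > 0` for `u ≠ 0`. -/
theorem Jcyl_compatible (m : ℕ) (τ : ℝ → ℝ) (hτ : ContDiff ℝ (⊤ : ℕ∞) τ)
    (hτpos : ∀ a, 0 < τ a) (hτ' : ∀ a, 0 < deriv τ a)
    (a b : ℝ) (z : ℂ × (Fin m → ℂ)) :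
    (∀ u₁ u₂ : ℝ × ℝ × (ℂ × (Fin m → ℂ)),
      omegaCyl m τ a z (Jcyl m z u₁) (Jcyl m z u₂) = omegaCyl m τ a z u₁ u₂) ∧
    (∀ u : ℝ × ℝ × (ℂ × (Fin m → ℂ)), u ≠ 0 →
      0 < omegaCyl m τ a z u (Jcyl m z u)) := by
  have hJ (u : ℝ × ℝ × (ℂ × (Fin m → ℂ))) : (Jcyl m z u).2.2 = Complex.I • u.2.2 := rfl
  refine ⟨fun u₁ u₂ => ?_, fun u hu => ?_⟩
  · simp only [omegaCyl, Jcyl_contact, Jcyl_fst]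
    rw [hJ, hJ, sigmaCyl_I_smul]
    ring
  · have key : omegaCyl m τ a z u (Jcyl m z u) =
        deriv τ a * (u.1 ^ 2 + (u.2.1 + lamCyl m z u.2.2) ^ 2)
          + τ a * sigmaCyl m u.2.2 (Complex.I • u.2.2) := by
      simp only [omegaCyl, Jcyl_contact, Jcyl_fst]
      rw [hJ]
      ring
    rw [key]
    by_cases hv : u.2.2 = 0
    · -- Here `θ` reduces to `β`, so `(α, β) ≠ 0` makes the first summand positive.
      have hl : lamCyl m z u.2.2 = 0 := by simp [lamCyl, hv]
      have hαβ : 0 < u.1 ^ 2 + u.2.1 ^ 2 := by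
        by_contra! h
        have h1 : u.1 = 0 := by nlinarith [sq_nonneg u.1, sq_nonneg u.2.1]
        have h2 : u.2.1 = 0 := by nlinarith [sq_nonneg u.1, sq_nonneg u.2.1]
        exact hu (Prod.ext h1 (Prod.ext h2 hv))
      rw [hl, add_zero]
      exact add_pos_of_pos_of_nonneg (mul_pos (hτ' a) hαβ)
        (mul_nonneg (hτpos a).le (sigmaCyl_self_I_smul_nonneg m _))
    · exact add_pos_of_nonneg_of_pos (mul_nonneg (hτ' a).le (by positivity))
        (mul_pos (hτpos a) (sigmaCyl_self_I_smul_pos m hv))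
end

section
/- Let ψ : ℂⁿ → ℝ be twice continuously differentiable, let U ⊆ ℂ be open, and let h : U → ℂⁿ be holomorphic. Then for every w ∈ U, Δ(ψ ∘ h)(w) equals the Laplacian at ζ = 0 of the function ζ ↦ ψ(h(w) + ζ·h'(w)). In particular, if ψ is plurisubharmonic in the sense that for every z ∈ ℂⁿ and v ∈ ℂⁿ the function ζ ↦ ψ(z + ζ·v) has nonnegative Laplacian at ζ = 0, then Δ(ψ ∘ h) ≥ 0 on U, i.e. ψ ∘ h is subharmonic. -/
/-!
Write `c` for one of the directions `1`, `i`. Since `h` is holomorphic, its real derivative in the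
direction `c` is `c • h'`, so differentiating `ψ ∘ h` twice in the direction `c` gives
`D²ψ(h w)(c • h' w, c • h' w) + Dψ(h w)(c² • h'' w)`. As `1² + i² = 0`, the first-order terms
cancel in the sum over the two directions (`lap_comp_eq`): the Laplacian of `ψ ∘ h` at `w` depends
only on `h w` and `h' w`. The affine map `ζ ↦ h w + ζ • h' w` has the same value and derivative at
`0`, so it gives the same Laplacian, which is nonnegative if `ψ` is plurisubharmonic.
-/

open Complex

/-- The Laplacian of a function `f : ℂ → ℝ` at `w`: the sum of the second
directional derivatives of `f` at `w` in the directions `1` and `i`. -/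
noncomputable def lap (f : ℂ → ℝ) (w : ℂ) : ℝ :=
  fderiv ℝ (fun z => fderiv ℝ f z 1) w 1 +
    fderiv ℝ (fun z => fderiv ℝ f z Complex.I) w Complex.I

/-- The second derivative of `ψ ∘ h` in the direction `c`, for `h` holomorphic: the second-order
chain rule, in which the derivative of `h` in the direction `c` is `c • h'`. -/
lemma fderiv_fderiv_comp_holomorphic {n : ℕ} {ψ : (Fin n → ℂ) → ℝ} (hψ : ContDiff ℝ 2 ψ)
    {U : Set ℂ} (hU : IsOpen U) {h : ℂ → Fin n → ℂ} (hh : DifferentiableOn ℂ h U)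
    {w : ℂ} (hw : w ∈ U) (c : ℂ) :
    fderiv ℝ (fun z => fderiv ℝ (fun z => ψ (h z)) z c) w c =
      fderiv ℝ (fderiv ℝ ψ) (h w) (c • deriv h w) (c • deriv h w) +
        fderiv ℝ ψ (h w) ((c * c) • deriv (deriv h) w) := by
  have hreal {g : ℂ → Fin n → ℂ} (hg : DifferentiableOn ℂ g U) {z : ℂ} (hz : z ∈ U) :
      HasFDerivAt g ((fderiv ℂ g z).restrictScalars ℝ) z :=
    (hg.differentiableAt (hU.mem_nhds hz)).hasFDerivAt.restrictScalars ℝ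
  have hfst : (fun z => fderiv ℝ (fun z => ψ (h z)) z c) =ᶠ[nhds w]
      fun z => fderiv ℝ ψ (h z) (c • deriv h z) := by
    filter_upwards [hU.mem_nhds hw] with z hz
    have hd : HasFDerivAt ψ (fderiv ℝ ψ (h z)) (h z) :=
      (hψ.differentiable (by norm_num) (h z)).hasFDerivAt
    have hcomp := hd.comp z (hreal hh hz)
    have heq : fderiv ℝ (fun z => ψ (h z)) z = _ := hcomp.fderiv
    rw [heq]
    simp [fderiv_eq_smul_deriv]
  have hD : HasFDerivAt (fderiv ℝ ψ) (fderiv ℝ (fderiv ℝ ψ) (h w)) (h w) :=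
    ((hψ.fderiv_right (m := 1) (by norm_num)).differentiable (by norm_num) (h w)).hasFDerivAt
  have hsnd := (hD.comp w (hreal hh hw)).clm_apply
    (hreal ((hh.deriv hU).const_smul c) hw)
  have hc : fderiv ℂ (c • deriv h) w c = (c * c) • deriv (deriv h) w := by
    rw [fderiv_const_smul ((hh.deriv hU).differentiableAt (hU.mem_nhds hw))]
    simp [fderiv_eq_smul_deriv, smul_smul]
  have heq : fderiv ℝ (fun z => fderiv ℝ ψ (h z) (c • deriv h z)) w = _ := hsnd.fderiv
  rw [hfst.fderiv_eq, heq]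
  simp [hc, fderiv_eq_smul_deriv, add_comm]

/-- The Laplacian of `ψ ∘ h` involves only `h w` and `h' w`: the contributions of `h'' w` from the
directions `1` and `i` are opposite. -/
lemma lap_comp_eq {n : ℕ} {ψ : (Fin n → ℂ) → ℝ} (hψ : ContDiff ℝ 2 ψ)
    {U : Set ℂ} (hU : IsOpen U) {h : ℂ → Fin n → ℂ} (hh : DifferentiableOn ℂ h U)
    {w : ℂ} (hw : w ∈ U) :
    lap (fun z => ψ (h z)) w =
      fderiv ℝ (fderiv ℝ ψ) (h w) (deriv h w) (deriv h w) +
        fderiv ℝ (fderiv ℝ ψ) (h w) (I • deriv h w) (I • deriv h w) := by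
  unfold lap
  rw [fderiv_fderiv_comp_holomorphic hψ hU hh hw 1, fderiv_fderiv_comp_holomorphic hψ hU hh hw I]
  simp only [I_mul_I, one_smul, one_mul, neg_smul, map_neg]
  ring

/-- For `ψ : ℂⁿ → ℝ` of class `C²` and `h : U → ℂⁿ` holomorphic, the Laplacian of
`ψ ∘ h` at `w ∈ U` equals the Laplacian at `ζ = 0` of `ζ ↦ ψ(h(w) + ζ·h'(w))`.
In particular, if `ψ` is plurisubharmonic, then `ψ ∘ h` is subharmonic on `U`. -/
theorem lap_comp_holomorphic (n : ℕ) (ψ : (Fin n → ℂ) → ℝ)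
    (hψ : ContDiff ℝ 2 ψ) (U : Set ℂ) (hU : IsOpen U)
    (h : ℂ → Fin n → ℂ) (hh : DifferentiableOn ℂ h U) :
    (∀ w ∈ U, lap (fun z => ψ (h z)) w =
      lap (fun ζ => ψ (h w + ζ • fderiv ℂ h w 1)) 0) ∧
    ((∀ (z v : Fin n → ℂ), 0 ≤ lap (fun ζ => ψ (z + ζ • v)) 0) →
      ∀ w ∈ U, 0 ≤ lap (fun z => ψ (h z)) w) := by
  have key : ∀ w ∈ U, lap (fun z => ψ (h z)) w =
      lap (fun ζ => ψ (h w + ζ • fderiv ℂ h w 1)) 0 := by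
    intro w hw
    have hd (ζ : ℂ) : HasDerivAt (fun ζ : ℂ => h w + ζ • fderiv ℂ h w 1) (deriv h w) ζ := by
      simpa using ((hasDerivAt_id ζ).smul_const (fderiv ℂ h w 1)).const_add (h w)
    rw [lap_comp_eq hψ hU hh hw, lap_comp_eq hψ isOpen_univ
      (fun ζ _ => (hd ζ).differentiableAt.differentiableWithinAt) (Set.mem_univ 0), (hd 0).deriv]
    simp
  refine ⟨key, fun hpsh w hw => ?_⟩
  rw [key w hw]
  exact hpsh _ _
end

section
/- Let ψ : ℂⁿ → ℝ be smooth, let h : Int(𝔻) → ℂⁿ be holomorphic on the open unit disc Int(𝔻) ⊆ ℂ, and let a : Int(𝔻) → ℝ be twice continuously differentiable such that a − ψ ∘ h is harmonic on Int(𝔻) (i.e. Δ(a − ψ∘h) = 0). Then there exists a function b : Int(𝔻) → ℝ such that the map u = (a, b, h) : Int(𝔻) → ℝ × ℝ × ℂⁿ is J-holomorphic; equivalently, the function w ↦ a(w) − ψ(h(w)) + i·b(w) is holomorphic on Int(𝔻). -/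
/-!
Since `h` is holomorphic, `f = a - ψ ∘ h` is `C²`, so the vanishing of its Laplacian makes it
harmonic on the disc, hence the real part of a holomorphic function `F` on the disc
(`InnerProductSpace.HarmonicOnNhd.exists_analyticOnNhd_ball_re_eq`). Take `b = Im F`. The two real
components of the `J`-holomorphicity equation for `(a, b, h)`, after using
`df = da - dψ ∘ dh` and the complex linearity of `dh`, read `df (iζ) = -db ζ` and
`db (iζ) = df ζ`: these are the Cauchy-Riemann equations for `F = f + i b`.
-/

open Complex Metric

/-- The almost complex structure `J` on `ℝ × ℝ × ℂⁿ` associated with a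
potential `ψ : ℂⁿ → ℝ`:  `J_z (α, β, v) = (dψ_z(i·v) − β, α − dψ_z(v), i·v)`. -/
noncomputable def Jstd (n : ℕ) (ψ : (Fin n → ℂ) → ℝ) (z : Fin n → ℂ)
    (q : ℝ × ℝ × (Fin n → ℂ)) : ℝ × ℝ × (Fin n → ℂ) :=
  (fderiv ℝ ψ z (Complex.I • q.2.2) - q.2.1,
   q.1 - fderiv ℝ ψ z q.2.2,
   Complex.I • q.2.2)

/-- For a `C²` function, the coordinate Laplacian `lap` is Mathlib's Laplacian. -/
lemma lap_eq_laplacian {f : ℂ → ℝ} {w : ℂ} (hf : ContDiffAt ℝ 2 f w) :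
    lap f w = Laplacian.laplacian f w := by
  have hd : DifferentiableAt ℝ (fderiv ℝ f) w :=
    (hf.fderiv_right (m := 1) (by norm_num)).differentiableAt one_ne_zero
  rw [InnerProductSpace.laplacian_eq_iteratedFDeriv_complexPlane]
  simp only [lap, iteratedFDeriv_two_apply]
  rw [fderiv_clm_apply hd (by fun_prop), fderiv_clm_apply hd (by fun_prop)]
  simp

/-- If `a - ψ ∘ h` agrees near `w` with the real part of a function `F` holomorphic at `w`, then
`(a, Im F, h)` satisfies the `J`-holomorphicity equation at `w`. -/
lemma jHolomorphic_of_re_eq {n : ℕ} {ψ : (Fin n → ℂ) → ℝ} {h : ℂ → Fin n → ℂ} {a : ℂ → ℝ}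
    {F : ℂ → ℂ} {w : ℂ} (hψ : DifferentiableAt ℝ ψ (h w)) (hh : DifferentiableAt ℂ h w)
    (ha : DifferentiableAt ℝ a w) (hF : DifferentiableAt ℂ F w)
    (hre : (fun z => (F z).re) =ᶠ[nhds w] fun z => a z - ψ (h z)) :
    DifferentiableAt ℝ (fun z => (a z, (F z).im, h z)) w ∧
      ∀ ζ : ℂ,
        fderiv ℝ (fun z => (a z, (F z).im, h z)) w (Complex.I * ζ) =
          Jstd n ψ (h w) (fderiv ℝ (fun z => (a z, (F z).im, h z)) w ζ) := by
  have hH := hh.hasFDerivAt.restrictScalars ℝ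
  have hG := hF.hasFDerivAt.restrictScalars ℝ
  have hB := imCLM.hasFDerivAt.comp w hG
  have hR := (reCLM.hasFDerivAt.comp w hG).congr_of_eventuallyEq hre.symm
  have hA := ha.hasFDerivAt
  have hS := hA.sub (hψ.hasFDerivAt.comp w hH)
  have hU := hA.prodMk (hB.prodMk hH)
  have hU' : fderiv ℝ (fun z => (a z, (F z).im, h z)) w = _ := hU.fderiv
  -- `Re ∘ dF` and `da - dψ ∘ dh` are both the derivative of `a - ψ ∘ h`.
  have key : ∀ ζ : ℂ, (fderiv ℂ F w ζ).re
      = fderiv ℝ a w ζ - fderiv ℝ ψ (h w) (fderiv ℂ h w ζ) := fun ζ =>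
    congrArg (fun L : ℂ →L[ℝ] ℝ => L ζ) (hR.unique hS)
  refine ⟨hU.differentiableAt, fun ζ => ?_⟩
  have hhI : fderiv ℂ h w (I * ζ) = I • fderiv ℂ h w ζ := by
    rw [← smul_eq_mul, map_smul]
  have hFI : fderiv ℂ F w (I * ζ) = I * fderiv ℂ F w ζ := by
    rw [← smul_eq_mul, map_smul, smul_eq_mul]
  have k1 := key ζ
  have k2 := key (I * ζ)
  rw [hFI, hhI] at k2
  rw [hU']
  simp only [Jstd, ContinuousLinearMap.prod_apply, ContinuousLinearMap.comp_apply,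
    ContinuousLinearMap.coe_restrictScalars', imCLM_apply, hhI, hFI]
  simp only [mul_re, mul_im, I_re, I_im, zero_mul, one_mul, zero_sub, zero_add] at k2 ⊢
  refine Prod.ext ?_ (Prod.ext ?_ rfl)
  · dsimp only
    linarith
  · dsimp only
    linarith

/-- Lifting holomorphic discs: if `h` is holomorphic on the open unit disc and
`a − ψ ∘ h` is harmonic there, then there is a function `b` making
`u = (a, b, h)` a `J`-holomorphic disc; equivalently, `a − ψ ∘ h + i·b` is
holomorphic. -/
theorem lift_holomorphic_disc (n : ℕ) (ψ : (Fin n → ℂ) → ℝ)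
    (hψ : ContDiff ℝ (⊤ : ℕ∞) ψ) (h : ℂ → Fin n → ℂ)
    (hh : DifferentiableOn ℂ h (ball (0 : ℂ) 1))
    (a : ℂ → ℝ) (ha : ContDiffOn ℝ 2 a (ball (0 : ℂ) 1))
    (hharm : ∀ w ∈ ball (0 : ℂ) 1, lap (fun z => a z - ψ (h z)) w = 0) :
    ∃ b : ℂ → ℝ,
      (∀ w ∈ ball (0 : ℂ) 1,
        DifferentiableAt ℝ (fun z => (a z, b z, h z)) w ∧
        ∀ ζ : ℂ,
          fderiv ℝ (fun z => (a z, b z, h z)) w (Complex.I * ζ) =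
            Jstd n ψ (h w) (fderiv ℝ (fun z => (a z, b z, h z)) w ζ)) ∧
      DifferentiableOn ℂ
        (fun w => ((a w - ψ (h w) : ℝ) : ℂ) + Complex.I * (b w : ℂ))
        (ball (0 : ℂ) 1) := by
  have hf : ContDiffOn ℝ 2 (fun z => a z - ψ (h z)) (ball (0 : ℂ) 1) :=
    ha.sub ((contDiff_infty.1 hψ 2).comp_contDiffOn
      ((hh.contDiffOn isOpen_ball).restrict_scalars ℝ))
  have hfAt : ∀ w ∈ ball (0 : ℂ) 1, ContDiffAt ℝ 2 (fun z => a z - ψ (h z)) w :=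
    fun w hw => hf.contDiffAt (isOpen_ball.mem_nhds hw)
  have hharm' : InnerProductSpace.HarmonicOnNhd (fun z => a z - ψ (h z)) (ball (0 : ℂ) 1) := by
    intro w hw
    refine ⟨hfAt w hw, ?_⟩
    filter_upwards [isOpen_ball.mem_nhds hw] with z hz
    rw [← lap_eq_laplacian (hfAt z hz), hharm z hz, Pi.zero_apply]
  obtain ⟨F, hF, hre⟩ := hharm'.exists_analyticOnNhd_ball_re_eq
  refine ⟨fun z => (F z).im, fun w hw => ?_, ?_⟩
  · have hnhds := isOpen_ball.mem_nhds hw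
    exact jHolomorphic_of_re_eq (hψ.differentiable (by simp) _) (hh.differentiableAt hnhds)
      ((ha.contDiffAt hnhds).differentiableAt two_ne_zero) (hF w hw).differentiableAt
      (hre.eventuallyEq_of_mem hnhds)
  · refine hF.differentiableOn.congr fun w hw => ?_
    rw [← show (F w).re = a w - ψ (h w) from hre hw, mul_comm]
    exact re_add_im (F w)
end

section
/- Let ψ = ψ_cyl be the cylinder potential and J the associated almost complex structure on ℝ × ℝ × ℂ × ℂ^{n−1}. Then for all b ∈ ℝ and s, t ∈ ℝ^{n−1}, the standard disc u^t_{s,b} : 𝔻 → ℝ × ℝ × ℂ × ℂ^{n−1}, u^t_{s,b}(w) = ((|w|² − 1)/4, b, w, s + i·t), is J-holomorphic on the open unit disc, and it maps the boundary circle ∂𝔻 into the Lagrangian cylinder L^t. -/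
/-!
The disc is `u(w) = (g w, b, (w, const))` with `g w = (|w|² − 1)/4`, so
`Du_w(ζ) = (dg_w ζ, 0, (ζ, 0))`. On vectors `(ζ, 0)` the differential of the cylinder potential at
`(w, z')` is `Re (w̄ ζ) / 2 = dg_w ζ` (`fderiv_psiCyl_apply_fst`, `hasFDerivAt_uStd`): the
imaginary parts of the remaining coordinates do not vary. Hence
`J (Du_w ζ) = (dg_w (i ζ), dg_w ζ − dg_w ζ, (i ζ, 0)) = Du_w (i ζ)`. On the circle `|w| = 1` the
first coordinate vanishes, which is the boundary condition.
-/

open Complex Metric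

/-- The Lagrangian cylinder `L^t = {(0, b, z₀, x + i·t) : b ∈ ℝ, |z₀| = 1, x ∈ ℝ^{n−1}}`. -/
def Lcyl (m : ℕ) (t : Fin m → ℝ) : Set (ℝ × ℝ × (ℂ × (Fin m → ℂ))) :=
  {p | p.1 = 0 ∧ ‖p.2.2.1‖ = 1 ∧ ∀ j, (p.2.2.2 j).im = t j}

/-- The standard disc `u^t_{s,b}(w) = ((|w|² − 1)/4, b, w, s + i·t)`. -/
noncomputable def uStd (m : ℕ) (s t : Fin m → ℝ) (b : ℝ) (w : ℂ) :
    ℝ × ℝ × (ℂ × (Fin m → ℂ)) :=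
  ((Complex.normSq w - 1) / 4, b, (w, fun j => (s j : ℂ) + (t j : ℂ) * Complex.I))


/-- The real differential `ζ ↦ Re (w̄ ζ) / 2` at `w` of `w ↦ |w|² / 4`. -/
noncomputable def quarterNormSqDeriv (w : ℂ) : ℂ →L[ℝ] ℝ :=
  (w.re / 2) • Complex.reCLM + (w.im / 2) • Complex.imCLM

lemma hasFDerivAt_normSq_div_four (w : ℂ) :
    HasFDerivAt (fun z : ℂ => Complex.normSq z / 4) (quarterNormSqDeriv w) w := by
  have hre : HasFDerivAt (fun z : ℂ => z.re) Complex.reCLM w := Complex.reCLM.hasFDerivAt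
  have him : HasFDerivAt (fun z : ℂ => z.im) Complex.imCLM w := Complex.imCLM.hasFDerivAt
  have h := ((hre.mul hre).add (him.mul him)).const_mul (1 / 4 : ℝ)
  refine (h.congr_of_eventuallyEq (.of_forall fun z => ?_)).congr_fderiv ?_
  · simp [Complex.normSq_apply]
    ring
  · ext ζ
    simp [quarterNormSqDeriv]
    ring

lemma differentiable_psiCyl (m : ℕ) : Differentiable ℝ (psiCyl m) := by
  have hn : Differentiable ℝ (fun z : ℂ => Complex.normSq z / 4) :=
    fun w => (hasFDerivAt_normSq_div_four w).differentiableAt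
  have him : ∀ j : Fin m, Differentiable ℝ (fun z : ℂ × (Fin m → ℂ) => (z.2 j).im) := fun j => by
    have hj : Differentiable ℝ (fun z : ℂ × (Fin m → ℂ) => z.2 j) := by fun_prop
    exact Complex.imCLM.differentiable.comp hj
  exact (hn.comp differentiable_fst).add
    ((Differentiable.fun_sum fun j _ => (him j).pow 2).const_mul _)

/-- The differential of the cylinder potential along the first factor. It is computed by
restricting the potential to the slice `w ↦ (w, z')`, on which it is `|w|² / 4` plus a constant. -/
lemma fderiv_psiCyl_apply_fst (m : ℕ) (w : ℂ) (z' : Fin m → ℂ) (ζ : ℂ) :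
    fderiv ℝ (psiCyl m) (w, z') (ζ, 0) = quarterNormSqDeriv w ζ := by
  have h₁ := (differentiable_psiCyl m (w, z')).hasFDerivAt.comp w
    (hasFDerivAt_prodMk_left (𝕜 := ℝ) w z')
  have h₂ : HasFDerivAt (psiCyl m ∘ fun w => (w, z')) (quarterNormSqDeriv w) w :=
    (hasFDerivAt_normSq_div_four w).add_const ((1 / 2) * ∑ j, (z' j).im ^ 2)
  simpa using DFunLike.congr_fun (h₁.unique h₂) ζ

lemma hasFDerivAt_uStd (m : ℕ) (s t : Fin m → ℝ) (b : ℝ) (w : ℂ) :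
    HasFDerivAt (uStd m s t b)
      ((quarterNormSqDeriv w).prod
        ((0 : ℂ →L[ℝ] ℝ).prod
          ((ContinuousLinearMap.id ℝ ℂ).prod (0 : ℂ →L[ℝ] (Fin m → ℂ))))) w := by
  have hg : HasFDerivAt (fun z : ℂ => (Complex.normSq z - 1) / 4) (quarterNormSqDeriv w) w := by
    simpa only [sub_div] using (hasFDerivAt_normSq_div_four w).sub_const (1 / 4 : ℝ)
  exact hg.prodMk ((hasFDerivAt_const b w).prodMk
    ((hasFDerivAt_id w).prodMk (hasFDerivAt_const _ w)))

/-- Each standard disc `u^t_{s,b}` is `J`-holomorphic on the open unit disc and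
maps the boundary circle into the Lagrangian cylinder `L^t`. -/
theorem uStd_holomorphic_and_boundary (m : ℕ) (b : ℝ) (s t : Fin m → ℝ) :
    (∀ w ∈ ball (0 : ℂ) 1,
      DifferentiableAt ℝ (uStd m s t b) w ∧
      ∀ ζ : ℂ,
        fderiv ℝ (uStd m s t b) w (Complex.I * ζ) =
          Jcyl m (uStd m s t b w).2.2 (fderiv ℝ (uStd m s t b) w ζ)) ∧
    (∀ w : ℂ, ‖w‖ = 1 → uStd m s t b w ∈ Lcyl m t) := by
  refine ⟨fun w _ => ⟨(hasFDerivAt_uStd m s t b w).differentiableAt, fun ζ => ?_⟩, fun w hw => ?_⟩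
  · rw [(hasFDerivAt_uStd m s t b w).fderiv]
    simp [Jcyl, uStd, fderiv_psiCyl_apply_fst]
  · refine ⟨?_, hw, fun j => by simp [uStd]⟩
    simp [uStd, Complex.normSq_eq_norm_sq, hw]
end

section
/- Let ψ = ψ_cyl be the cylinder potential, τ : ℝ → ℝ smooth with τ > 0 and τ' > 0, and ω = d(τα) the associated symplectic form on ℝ × ℝ × ℂ × ℂ^{n−1}. Then for each t ∈ ℝ^{n−1}, the cylinder L^t is Lagrangian: at every point p = (0, b, z₀, x + i·t) ∈ L^t, the tangent space T_p L^t = {(0, β, μ·i·z₀, ξ) : β, μ ∈ ℝ, ξ ∈ ℝ^{n−1}} is an (n+1)-dimensional real subspace of ℝ × ℝ × ℂ × ℂ^{n−1} (which has real dimension 2n+2) on which ω_p vanishes identically: ω_p(u₁, u₂) = 0 for all u₁, u₂ ∈ T_p L^t. -/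
/-!
A tangent vector to `L^t` has vanishing first coordinate, so the `dτ ∧ α` part of `ω` dies on pairs
of tangent vectors, whatever the value of `λ`. In the `σ` part, the `z₀`-components of two tangent
vectors are real multiples of the same vector `i·z₀`, and the remaining components are real, so `σ`
vanishes as well. The tangent space is the range of the linear parametrisation `Lcyl.tangentMap`,
which is injective because `z₀ ≠ 0`; this gives its dimension `1 + 1 + m`.
-/

open Complex

/-- The linear parametrisation `(β, μ, ξ) ↦ (0, β, μ·i·z₀, ξ)` of the tangent space to `L^t`. -/
noncomputable def Lcyl.tangentMap (m : ℕ) (z₀ : ℂ) :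
    (ℝ × ℝ × (Fin m → ℝ)) →ₗ[ℝ] (ℝ × ℝ × (ℂ × (Fin m → ℂ))) where
  toFun p := (0, p.1, (p.2.1 • (Complex.I * z₀), fun j => (p.2.2 j : ℂ)))
  map_add' p q := by
    ext <;> simp [add_mul]
  map_smul' c p := by
    ext <;> simp [mul_assoc]

theorem Lcyl.tangentMap_injective (m : ℕ) {z₀ : ℂ} (hz₀ : z₀ ≠ 0) :
    Function.Injective (Lcyl.tangentMap m z₀) := by
  rintro ⟨β, μ, ξ⟩ ⟨β', μ', ξ'⟩ h
  simp only [Lcyl.tangentMap, LinearMap.coe_mk, AddHom.coe_mk, Prod.mk.injEq, true_and] at h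
  obtain ⟨hβ, hμ, hξ⟩ := h
  have hμ' : μ = μ' := smul_left_injective ℝ (mul_ne_zero Complex.I_ne_zero hz₀) hμ
  have hξ' : ξ = ξ' := funext fun j => Complex.ofReal_injective (congrFun hξ j)
  rw [hβ, hμ', hξ']

/-- The cylinders `L^t` are Lagrangian: at `p = (0, b, z₀, x + i·t) ∈ L^t` the
tangent space `{(0, β, μ·i·z₀, ξ) : β, μ ∈ ℝ, ξ ∈ ℝ^{n−1}}` is an
`(n+1)`-dimensional real subspace of the `(2n+2)`-dimensional ambient space on
which `ω_p` vanishes identically (here `n = m + 1`). -/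
theorem Lcyl_lagrangian (m : ℕ) (τ : ℝ → ℝ) (hτ : ContDiff ℝ (⊤ : ℕ∞) τ)
    (hτpos : ∀ a, 0 < τ a) (hτ' : ∀ a, 0 < deriv τ a)
    (b : ℝ) (z₀ : ℂ) (hz₀ : ‖z₀‖ = 1) (x t : Fin m → ℝ) :
    let z : ℂ × (Fin m → ℂ) := (z₀, fun j => (x j : ℂ) + (t j : ℂ) * Complex.I)
    let S : Set (ℝ × ℝ × (ℂ × (Fin m → ℂ))) :=
      {q | ∃ (β μ : ℝ) (ξ : Fin m → ℝ),
        q = (0, β, (μ • (Complex.I * z₀), fun j => (ξ j : ℂ)))}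
    (∃ T : Submodule ℝ (ℝ × ℝ × (ℂ × (Fin m → ℂ))),
      (T : Set (ℝ × ℝ × (ℂ × (Fin m → ℂ)))) = S ∧ Module.finrank ℝ T = m + 2) ∧
    Module.finrank ℝ (ℝ × ℝ × (ℂ × (Fin m → ℂ))) = 2 * m + 4 ∧
    (∀ u₁ ∈ S, ∀ u₂ ∈ S, omegaCyl m τ 0 z u₁ u₂ = 0) := by
  intro z S
  have hz : z₀ ≠ 0 := norm_ne_zero_iff.mp (by rw [hz₀]; exact one_ne_zero)
  refine ⟨⟨LinearMap.range (Lcyl.tangentMap m z₀), ?_, ?_⟩, ?_, ?_⟩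
  · ext q
    constructor
    · rintro ⟨⟨β, μ, ξ⟩, rfl⟩
      exact ⟨β, μ, ξ, rfl⟩
    · rintro ⟨β, μ, ξ, rfl⟩
      exact ⟨(β, μ, ξ), rfl⟩
  · rw [LinearMap.finrank_range_of_inj (Lcyl.tangentMap_injective m hz)]
    simp only [Module.finrank_prod, Module.finrank_self, Module.finrank_fin_fun]
    omega
  · simp only [Module.finrank_prod, Module.finrank_self, Module.finrank_pi_fintype,
      Complex.finrank_real_complex, Finset.sum_const, Finset.card_univ, Fintype.card_fin,
      smul_eq_mul]
    omega
  · rintro _ ⟨β, μ, ξ, rfl⟩ _ ⟨β', μ', ξ', rfl⟩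
    have hσ : sigmaCyl m (μ • (Complex.I * z₀), fun j => (ξ j : ℂ))
        (μ' • (Complex.I * z₀), fun j => (ξ' j : ℂ)) = 0 := by
      simp [sigmaCyl]
      ring
    simp only [omegaCyl, hσ, zero_mul, sub_zero, mul_zero, add_zero]
end

section
/- Let h : 𝔻 → ℂ be continuous on the closed unit disc 𝔻 ⊆ ℂ and holomorphic on the open unit disc. Suppose h maps the unit circle ∂𝔻 into itself and the restriction of h to ∂𝔻 is injective. Then h maps the open unit disc bijectively onto the open unit disc; in particular, h restricted to the open disc is a holomorphic automorphism of the open unit disc. -/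
/-!
Let `a = h 0`. By the maximum principle `‖a‖ < 1`, so composing `h` with the disc automorphism
`w ↦ (w - a) / (1 - conj a * w)` reduces the claim to the case `h 0 = 0`, where `h` turns out to be
a rotation.

In that case write `h z = z * k z` and `c = k 0`. On the unit circle `conj z * h z = k z` and
`h * conj h = 1`, so by the mean value property `f z = z - conj c * h z` has zero integral over the
circle against `h ^ n` for `n ≥ 0` (the integrand is holomorphic and vanishes at `0`) and against
`conj h ^ (n + 1)` (the integrand is the conjugate of `(k - c) * h ^ n`, which vanishes at `0`).
As `h` separates the points of the circle and `h * conj h = 1`, these powers span a dense subspace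
of the continuous functions by Stone–Weierstrass. Hence the integral of `f * conj f` is zero and
`f = 0` on the circle, that is, `z = conj c * h z` there. Thus `‖c‖ = 1` and `h z = c * z` on the
circle, and therefore on the whole disc.
-/

open Complex Metric

open scoped ComplexConjugate

/-- A continuous function on the unit circle whose integrals against all nonnegative powers of `h`
and all positive powers of `conj h` vanish is zero, provided `h` is an injective continuous
unimodular function: by Stone–Weierstrass these powers span a dense subspace of the continuous
functions on the circle. -/
lemma eq_zero_of_circleAverage_mul_pow_eq_zero {F h : ℂ → ℂ}
    (hF : ContinuousOn F (sphere (0 : ℂ) 1)) (hh : ContinuousOn h (sphere (0 : ℂ) 1))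
    (hbd : ∀ w : ℂ, ‖w‖ = 1 → ‖h w‖ = 1) (hinj : Set.InjOn h (sphere (0 : ℂ) 1))
    (hpos : ∀ k : ℕ, Real.circleAverage (fun z ↦ F z * h z ^ k) 0 1 = 0)
    (hneg : ∀ k : ℕ, Real.circleAverage (fun z ↦ F z * conj (h z) ^ (k + 1)) 0 1 = 0) :
    ∀ z ∈ sphere (0 : ℂ) 1, F z = 0 := by
  have h2pi : (2 * Real.pi)⁻¹ ≠ 0 := by positivity
  let e : ℝ → sphere (0 : ℂ) 1 := fun θ ↦ ⟨circleMap 0 1 θ, circleMap_mem_sphere 0 zero_le_one θ⟩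
  have he : Continuous e := (continuous_circleMap 0 1).subtype_mk _
  let F' : C(sphere (0 : ℂ) 1, ℂ) := ⟨_, hF.domRestrict⟩
  let H : C(sphere (0 : ℂ) 1, ℂ) := ⟨_, hh.domRestrict⟩
  have hHH : H * star H = 1 := by
    ext z
    have := hbd z (by simp)
    simp [H, Complex.mul_conj, Complex.normSq_eq_norm_sq, this]
  let L : C(sphere (0 : ℂ) 1, ℂ) →ₗ[ℂ] ℂ :=
    { toFun := fun g ↦ ∫ θ in 0..2 * Real.pi, F' (e θ) * g (e θ)
      map_add' := fun g₁ g₂ ↦ by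
        simp only [ContinuousMap.add_apply, mul_add]
        exact intervalIntegral.integral_add (Continuous.intervalIntegrable (by fun_prop) _ _)
          (Continuous.intervalIntegrable (by fun_prop) _ _)
      map_smul' := fun c g ↦ by
        simp only [ContinuousMap.smul_apply, smul_eq_mul, RingHom.id_apply,
          ← intervalIntegral.integral_const_mul]
        congr 1; ext θ; ring }
  have hLc : Continuous L :=
    intervalIntegral.continuous_parametric_intervalIntegral_of_continuous'
      (f := fun (g : C(sphere (0 : ℂ) 1, ℂ)) θ ↦ F' (e θ) * g (e θ))
      (by simp only [Function.uncurry_def]; fun_prop) _ _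
  have hLp (k : ℕ) : L (H ^ k) = 0 := by
    have := hpos k
    rw [Real.circleAverage_def, smul_eq_zero_iff_right h2pi] at this
    exact this
  have hLn (k : ℕ) : L (star H ^ (k + 1)) = 0 := by
    have := hneg k
    rw [Real.circleAverage_def, smul_eq_zero_iff_right h2pi] at this
    exact this
  have hmono (m n : ℕ) : L (H ^ m * star H ^ n) = 0 := by
    rcases le_or_gt n m with hnm | hnm
    · obtain ⟨k, rfl⟩ := Nat.exists_eq_add_of_le hnm
      rw [pow_add, mul_right_comm, ← mul_pow, hHH, one_pow, one_mul, hLp]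
    · obtain ⟨k, rfl⟩ := Nat.exists_eq_add_of_lt hnm
      rw [add_assoc, pow_add, ← mul_assoc, ← mul_pow, hHH, one_pow, one_mul, hLn]
  let A : StarSubalgebra ℂ C(sphere (0 : ℂ) 1, ℂ) := StarAlgebra.adjoin ℂ {H}
  have hA : A.topologicalClosure = ⊤ := by
    refine ContinuousMap.starSubalgebra_topologicalClosure_eq_top_of_separatesPoints A ?_
    intro x y hxy
    exact ⟨H, ⟨H, StarAlgebra.self_mem_adjoin_singleton ℂ H, rfl⟩,
      fun hE ↦ hxy (Subtype.ext (hinj x.2 y.2 hE))⟩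
  have hLA : ∀ g ∈ A, L g = 0 := by
    intro g hg
    have hg' : g ∈ Subalgebra.toSubmodule (Algebra.adjoin ℂ {H, star H}) := by
      have : g ∈ A.toSubalgebra := hg
      rwa [StarAlgebra.adjoin_toSubalgebra, Set.star_singleton, Set.singleton_union] at this
    rw [Algebra.adjoin_eq_span] at hg'
    refine Submodule.span_le (p := LinearMap.ker L).2 ?_ hg'
    intro x hx
    obtain ⟨m, n, rfl⟩ := Submonoid.mem_closure_pair _ _ _ |>.1 hx
    exact hmono m n
  have hL0 : L (star F') = 0 := by
    have : star F' ∈ closure (A : Set C(sphere (0 : ℂ) 1, ℂ)) := by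
      rw [← StarSubalgebra.topologicalClosure_coe, hA]; trivial
    exact closure_minimal (t := {g | L g = 0}) hLA (isClosed_eq hLc continuous_const) this
  have hint : ∫ θ in 0..2 * Real.pi, ‖F' (e θ)‖ ^ 2 = 0 := by
    have h1 : L (star F') = ∫ θ in 0..2 * Real.pi, ((‖F' (e θ)‖ ^ 2 : ℝ) : ℂ) := by
      refine intervalIntegral.integral_congr fun θ _ ↦ ?_
      simp [Complex.mul_conj, Complex.normSq_eq_norm_sq]
    rw [hL0, intervalIntegral.integral_ofReal] at h1
    exact_mod_cast h1.symm
  intro z hz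
  by_contra hne
  obtain ⟨θ, hθ, hθz⟩ : ∃ θ ∈ Set.Ioc 0 (2 * Real.pi), circleMap 0 1 θ = z := by
    have : z ∈ circleMap 0 1 '' Set.Ioc 0 (2 * Real.pi) := by
      rw [image_circleMap_Ioc]; simpa using hz
    exact this
  refine (intervalIntegral.integral_pos (f := fun θ ↦ ‖F' (e θ)‖ ^ 2) Real.two_pi_pos
    (by fun_prop) (fun _ _ ↦ by positivity) ⟨θ, Set.Ioc_subset_Icc_self hθ, ?_⟩).ne' hint
  have : F' (e θ) = F z := congrArg F hθz
  simp only [this]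
  positivity

/-- The normalised case `h 0 = 0`. Writing `h z = z * k z` and `c = k 0`, the function
`z - conj c * h z` is orthogonal to all integer powers of `h` on the circle, by the mean value
property, so it vanishes. -/
lemma exists_eq_mul_of_map_zero {h : ℂ → ℂ}
    (hcont : ContinuousOn h (closedBall (0 : ℂ) 1))
    (hholo : DifferentiableOn ℂ h (ball (0 : ℂ) 1))
    (hbd : ∀ w : ℂ, ‖w‖ = 1 → ‖h w‖ = 1)
    (hinj : Set.InjOn h (sphere (0 : ℂ) 1)) (h0 : h 0 = 0) :
    ∃ c : ℂ, ‖c‖ = 1 ∧ ∀ z ∈ ball (0 : ℂ) 1, h z = c * z := by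
  have hd : DiffContOnCl ℂ h (ball 0 1) := ⟨hholo, by rwa [closure_ball _ one_ne_zero]⟩
  set k := dslope h 0 with hk
  have hhk (z : ℂ) : h z = z * k z := by
    simpa [h0] using (sub_smul_dslope h 0 z).symm
  have hkd : DiffContOnCl ℂ k (ball 0 1) := by
    refine ⟨(Complex.differentiableOn_dslope (ball_mem_nhds 0 one_pos)).2 hholo, ?_⟩
    rw [closure_ball _ one_ne_zero]
    exact (continuousOn_dslope (closedBall_mem_nhds 0 one_pos)).2
      ⟨hcont, hholo.differentiableAt (ball_mem_nhds 0 one_pos)⟩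
  set c := k 0 with hc
  have hpow {f : ℂ → ℂ} (hf : DiffContOnCl ℂ f (ball 0 1)) (n : ℕ) :
      DiffContOnCl ℂ (fun z ↦ f z ^ n) (ball 0 1) := ⟨hf.1.pow n, hf.2.pow n⟩
  have hmul {f g : ℂ → ℂ} (hf : DiffContOnCl ℂ f (ball 0 1)) (hg : DiffContOnCl ℂ g (ball 0 1)) :
      DiffContOnCl ℂ (fun z ↦ f z * g z) (ball 0 1) := ⟨hf.1.mul hg.1, hf.2.mul hg.2⟩
  have hid : DiffContOnCl ℂ (fun z : ℂ ↦ z) (ball 0 1) := differentiable_id.diffContOnCl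
  have hconst (a : ℂ) : DiffContOnCl ℂ (fun _ : ℂ ↦ a) (ball 0 1) := diffContOnCl_const
  have hsub {f g : ℂ → ℂ} (hf : DiffContOnCl ℂ f (ball 0 1)) (hg : DiffContOnCl ℂ g (ball 0 1)) :
      DiffContOnCl ℂ (fun z ↦ f z - g z) (ball 0 1) := ⟨hf.1.sub hg.1, hf.2.sub hg.2⟩
  have havg {f : ℂ → ℂ} (hf : DiffContOnCl ℂ f (ball 0 1)) : Real.circleAverage f 0 1 = f 0 :=
    DiffContOnCl.circleAverage (by simpa using hf)
  have hunit {w : ℂ} (hw : ‖w‖ = 1) : w * conj w = 1 := by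
    simp [Complex.mul_conj, Complex.normSq_eq_norm_sq, hw]
  have key : ∀ z ∈ sphere (0 : ℂ) 1, z - conj c * h z = 0 := by
    have hs : ContinuousOn h (sphere (0 : ℂ) 1) := hcont.mono sphere_subset_closedBall
    refine eq_zero_of_circleAverage_mul_pow_eq_zero (by fun_prop) hs hbd hinj ?_ ?_
    · intro n
      rw [havg (hmul (hsub hid (hmul (hconst _) hd)) (hpow hd n))]
      simp [h0]
    · intro n
      -- On the circle `conj z * h z = k z` and `conj (h z) * h z = 1`, so the integrand is the
      -- conjugate of the holomorphic function `(k - c) * h ^ n`, which vanishes at `0`.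
      have h1 : Set.EqOn (fun z ↦ (z - conj c * h z) * conj (h z) ^ (n + 1))
          (fun z ↦ conj ((k z - c) * h z ^ n)) (sphere 0 |1|) := by
        intro z hz
        have hz1 : ‖z‖ = 1 := by simpa using hz
        have e1 := hunit hz1
        have e2 := hunit (hbd z hz1)
        have e3 : z * conj (h z) = conj (k z) := by
          rw [hhk z, map_mul, ← mul_assoc, e1, one_mul]
        simp only [map_mul, map_sub, map_pow]
        linear_combination conj (h z) ^ n * e3 - conj c * conj (h z) ^ n * e2
      rw [Real.circleAverage_congr_sphere h1]
      have hG := hmul (hsub hkd (hconst c)) (hpow hd n)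
      have h2 := Complex.conjCLE.toContinuousLinearMap.circleAverage_comp_comm (c := 0) (R := 1)
        (f := fun z ↦ (k z - c) * h z ^ n) ?_
      · refine h2.trans ?_
        rw [havg hG]
        simp [← hc]
      · refine ContinuousOn.circleIntegrable zero_le_one ?_
        have := hG.continuousOn
        rw [closure_ball _ one_ne_zero] at this
        exact this.mono sphere_subset_closedBall
  have hc1 : ‖c‖ = 1 := by
    have := congrArg norm (sub_eq_zero.1 (key 1 (by simp)))
    simpa [hbd 1 (by simp)] using this.symm
  refine ⟨c, hc1, Complex.eqOn_of_eqOn_frontier isBounded_ball hd (hmul (hconst c) hid) ?_⟩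
  intro z hz
  rw [frontier_ball _ one_ne_zero] at hz
  linear_combination (-c) * key z hz - h z * hunit hc1

/-- The disc automorphism `w ↦ (w - a) / (1 - conj a * w)`, meant for `‖a‖ < 1`. -/
noncomputable def discShift (a w : ℂ) : ℂ := (w - a) / (1 - conj a * w)

lemma one_sub_conj_mul_ne_zero {a w : ℂ} (ha : ‖a‖ < 1) (hw : ‖w‖ ≤ 1) :
    1 - conj a * w ≠ 0 := by
  intro h
  have h1 : ‖conj a * w‖ = 1 := by rw [← sub_eq_zero.1 h, norm_one]
  rw [norm_mul, RCLike.norm_conj] at h1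
  nlinarith [norm_nonneg a, norm_nonneg w]

lemma norm_sq_one_sub_conj_mul (a w : ℂ) :
    ‖1 - conj a * w‖ ^ 2 - ‖w - a‖ ^ 2 = (1 - ‖a‖ ^ 2) * (1 - ‖w‖ ^ 2) := by
  simp only [← Complex.normSq_eq_norm_sq, Complex.normSq_apply]
  simp
  ring

lemma norm_discShift_lt_one {a w : ℂ} (ha : ‖a‖ < 1) (hw : ‖w‖ < 1) : ‖discShift a w‖ < 1 := by
  have h0 := norm_pos_iff.2 (one_sub_conj_mul_ne_zero ha hw.le)
  rw [discShift, norm_div, div_lt_one h0]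
  refine lt_of_pow_lt_pow_left₀ 2 h0.le ?_
  have : 0 < (1 - ‖a‖ ^ 2) * (1 - ‖w‖ ^ 2) :=
    mul_pos (by nlinarith [norm_nonneg a]) (by nlinarith [norm_nonneg w])
  linarith [norm_sq_one_sub_conj_mul a w]

lemma norm_discShift_eq_one {a w : ℂ} (ha : ‖a‖ < 1) (hw : ‖w‖ = 1) : ‖discShift a w‖ = 1 := by
  have h0 := norm_pos_iff.2 (one_sub_conj_mul_ne_zero ha hw.le)
  rw [discShift, norm_div, div_eq_one_iff_eq h0.ne']
  have := norm_sq_one_sub_conj_mul a w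
  rw [hw] at this
  exact (sq_eq_sq₀ (norm_nonneg _) (norm_nonneg _)).1 (by linarith)

lemma discShift_neg_discShift {a w : ℂ} (ha : ‖a‖ < 1) (hw : ‖w‖ ≤ 1) :
    discShift (-a) (discShift a w) = w := by
  have h0 := one_sub_conj_mul_ne_zero ha hw
  have h1 := one_sub_conj_mul_ne_zero ha ha.le
  have h2 : 1 - conj (-a) * ((w - a) / (1 - conj a * w)) =
      (1 - conj a * a) / (1 - conj a * w) := by
    rw [eq_div_iff h0, sub_mul, mul_assoc, div_mul_cancel₀ _ h0, map_neg]
    ring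
  rw [discShift, discShift, h2, div_eq_iff (div_ne_zero h1 h0), ← mul_div_assoc, eq_div_iff h0,
    sub_mul, div_mul_cancel₀ _ h0]
  ring

lemma bijOn_discShift {a : ℂ} (ha : ‖a‖ < 1) :
    Set.BijOn (discShift a) (ball (0 : ℂ) 1) (ball (0 : ℂ) 1) := by
  have ha' : ‖-a‖ < 1 := by rwa [norm_neg]
  refine Set.InvOn.bijOn (f' := discShift (-a)) ⟨?_, ?_⟩ ?_ ?_
  · intro w hw
    exact discShift_neg_discShift ha (mem_ball_zero_iff.1 hw).le
  · intro w hw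
    simpa using discShift_neg_discShift ha' (mem_ball_zero_iff.1 hw).le
  · intro w hw
    simpa using norm_discShift_lt_one ha (mem_ball_zero_iff.1 hw)
  · intro w hw
    simpa using norm_discShift_lt_one ha' (mem_ball_zero_iff.1 hw)

/-- If `h` is continuous on the closed unit disc, holomorphic on the open unit
disc, maps the unit circle into itself, and is injective on the unit circle,
then `h` maps the open unit disc bijectively onto the open unit disc. -/
theorem boundary_injective_implies_disc_automorphism (h : ℂ → ℂ)
    (hcont : ContinuousOn h (closedBall (0 : ℂ) 1))
    (hholo : DifferentiableOn ℂ h (ball (0 : ℂ) 1))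
    (hbd : ∀ w : ℂ, ‖w‖ = 1 → ‖h w‖ = 1)
    (hinj : Set.InjOn h (sphere (0 : ℂ) 1)) :
    Set.BijOn h (ball (0 : ℂ) 1) (ball (0 : ℂ) 1) := by
  have hd : DiffContOnCl ℂ h (ball 0 1) := ⟨hholo, by rwa [closure_ball _ one_ne_zero]⟩
  have hle : ∀ z ∈ closedBall (0 : ℂ) 1, ‖h z‖ ≤ 1 := by
    intro z hz
    refine Complex.norm_le_of_forall_mem_frontier_norm_le isBounded_ball hd (fun w hw ↦ ?_)
      (by rwa [closure_ball _ one_ne_zero])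
    rw [frontier_ball _ one_ne_zero] at hw
    exact (hbd w (by simpa using hw)).le
  set a := h 0 with ha_def
  have ha : ‖a‖ < 1 := by
    refine (hle 0 (by simp)).lt_of_ne fun h1 ↦ ?_
    -- Otherwise `h` is constant, contradicting `h 1 ≠ h (-1)`.
    have hmax : IsMaxOn (norm ∘ h) (ball 0 1) 0 := fun z hz ↦
      (hle z (ball_subset_closedBall hz)).trans h1.ge
    have hE := Complex.eqOn_closedBall_of_isMaxOn_norm hd hmax
    have h2 : h 1 = h (-1) := (hE (x := 1) (by simp)).trans (hE (x := -1) (by simp)).symm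
    have h3 := hinj (by simp) (by simp) h2
    norm_num at h3
  have hle' : ∀ z ∈ ball (0 : ℂ) 1, ‖h z‖ ≤ 1 := fun z hz ↦ hle z (ball_subset_closedBall hz)
  obtain ⟨c, hc, hcz⟩ := exists_eq_mul_of_map_zero (h := fun z ↦ discShift a (h z))
    (by
      unfold discShift
      exact (hcont.sub continuousOn_const).div
        (continuousOn_const.sub (continuousOn_const.mul hcont))
        fun z hz ↦ one_sub_conj_mul_ne_zero ha (hle z hz))
    (by
      unfold discShift
      exact (hholo.sub_const _).div ((hholo.const_mul _).const_sub _)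
        fun z hz ↦ one_sub_conj_mul_ne_zero ha (hle' z hz))
    (fun w hw ↦ norm_discShift_eq_one ha (hbd w hw))
    (by
      intro z hz w hw hzw
      refine hinj hz hw ?_
      rw [← discShift_neg_discShift ha (hle z (sphere_subset_closedBall hz)),
        ← discShift_neg_discShift ha (hle w (sphere_subset_closedBall hw))]
      exact congrArg _ hzw)
    (by simp [discShift, ← ha_def])
  have hc0 : c ≠ 0 := norm_pos_iff.1 (by rw [hc]; exact one_pos)
  have hrot : Set.BijOn (fun z ↦ c * z) (ball (0 : ℂ) 1) (ball (0 : ℂ) 1) := by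
    refine Set.InvOn.bijOn (f' := fun z ↦ c⁻¹ * z) ⟨?_, ?_⟩ ?_ ?_
    · intro z _; simp [hc0]
    · intro z _; simp [hc0]
    · intro z hz; simpa [hc] using hz
    · intro z hz; simpa [hc] using hz
  refine ((bijOn_discShift (a := -a) (by rwa [norm_neg])).comp hrot).congr fun z hz ↦ ?_
  simp only [Function.comp, ← hcz z hz]
  exact discShift_neg_discShift ha (hle' z hz)
end

section
/- Let ψ : ℂⁿ → ℝ be smooth and plurisubharmonic, in the sense that for every z, v ∈ ℂⁿ the function ζ ↦ ψ(z + ζ·v) has nonnegative Laplacian at ζ = 0, and let J be the associated almost complex structure on ℝ × ℝ × ℂⁿ. Let u = (a, b, h) : U → ℝ × ℝ × ℂⁿ be twice continuously differentiable and J-holomorphic on an open set U ⊆ ℂ. Then: (i) the ℂⁿ-component h is holomorphic on U; (ii) for all w ∈ U and ζ ∈ ℂ one has the identity Db_w(ζ) + λ_{h(w)}(Dh_w(ζ)) = −Da_w(i·ζ), where λ_z(v) = −dψ_z(i·v) (i.e. u pulls back the contact form db + λ to −da ∘ i); and (iii) the function a is subharmonic on U: Δa ≥ 0. -/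
/-!
Reading `Du (i ζ) = J (Du ζ)` componentwise gives

* `Dh (i ζ) = i Dh ζ`, the Cauchy–Riemann equation for `h`;
* `Da (i ζ) = dψ (i Dh ζ) - Db ζ`, which is the pullback identity (ii);
* `Db (i ζ) = Da ζ - dψ (Dh ζ)`, that is `da = d(ψ ∘ h) + db ∘ i`.

Differentiating the last identity once more, the contributions of `b` to `Δa` are `∂₁∂ᵢb - ∂ᵢ∂₁b`,
which vanish since `b` is `C²`; hence `Δa = Δ(ψ ∘ h)` (`lap_eq_lap_of_conjugate`). The chain rule
(`lap_comp`) expresses `Δ(ψ ∘ h)` as `D²ψ(h', h') + D²ψ(i h', i h') + dψ(Δh)`. Here `Δh = 0` since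
`h` is holomorphic (`laplacian_eq_zero_of_cauchyRiemann`), and what is left is the Laplacian at `0`
of `ζ ↦ ψ (h w + ζ h')`, which is nonnegative by plurisubharmonicity.
-/

open Complex

/-- The Liouville form `λ_z(v) = −dψ_z(i·v)`. -/
noncomputable def lamStd (n : ℕ) (ψ : (Fin n → ℂ) → ℝ) (z : Fin n → ℂ)
    (v : Fin n → ℂ) : ℝ :=
  -(fderiv ℝ ψ z (Complex.I • v))

open Filter Topology

section Auxiliary

variable {E : Type*} [NormedAddCommGroup E] [NormedSpace ℝ E]

lemma hasFDerivAt_fderiv {G : Type*} [NormedAddCommGroup G] [NormedSpace ℝ G] {f : G → E} {w : G}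
    (hf : ContDiffAt ℝ 2 f w) :
    HasFDerivAt (fderiv ℝ f) (fderiv ℝ (fderiv ℝ f) w) w :=
  ((hf.fderiv_right (m := 1) (by norm_num)).differentiableAt (by norm_num)).hasFDerivAt

lemma fderiv_fderiv_apply {f : ℂ → E} {w : ℂ} (hf : ContDiffAt ℝ 2 f w) (ζ η : ℂ) :
    fderiv ℝ (fun z => fderiv ℝ f z ζ) w η = fderiv ℝ (fderiv ℝ f) w η ζ := by
  have := (hasFDerivAt_fderiv hf).clm_apply (hasFDerivAt_const ζ w)
  rw [this.fderiv]
  simp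

lemma fderiv_fderiv_symm {f : ℂ → E} {w : ℂ} (hf : ContDiffAt ℝ 2 f w) (ζ η : ℂ) :
    fderiv ℝ (fderiv ℝ f) w ζ η = fderiv ℝ (fderiv ℝ f) w η ζ :=
  (hf.isSymmSndFDerivAt (by simp)) ζ η

lemma fderiv_fderiv_comp {ψ : E → ℝ} {g : ℂ → E} {w : ℂ} (hψ : ContDiff ℝ 2 ψ)
    (hg : ContDiffAt ℝ 2 g w) (ζ : ℂ) :
    fderiv ℝ (fun z => fderiv ℝ (fun x => ψ (g x)) z ζ) w ζ =
      fderiv ℝ (fderiv ℝ ψ) (g w) (fderiv ℝ g w ζ) (fderiv ℝ g w ζ) +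
        fderiv ℝ ψ (g w) (fderiv ℝ (fderiv ℝ g) w ζ ζ) := by
  have hev : (fun z => fderiv ℝ (fun x => ψ (g x)) z ζ) =ᶠ[𝓝 w]
      fun z => fderiv ℝ ψ (g z) (fderiv ℝ g z ζ) := by
    filter_upwards [hg.eventually (by simp)] with z hz
    have h1 : HasFDerivAt ψ (fderiv ℝ ψ (g z)) (g z) :=
      (hψ.differentiable (by norm_num) _).hasFDerivAt
    have h2 := (hz.differentiableAt (by norm_num)).hasFDerivAt
    have h3 : HasFDerivAt (fun x => ψ (g x)) _ z := h1.comp z h2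
    rw [h3.fderiv]
    rfl
  rw [hev.fderiv_eq]
  have h1 : HasFDerivAt (fun z => fderiv ℝ ψ (g z)) _ w :=
    (hasFDerivAt_fderiv (hψ.contDiffAt (x := g w))).comp w
      (hg.differentiableAt (by norm_num)).hasFDerivAt
  have h2 := (hasFDerivAt_fderiv hg).clm_apply (hasFDerivAt_const ζ w)
  rw [(h1.clm_apply h2).fderiv]
  simp [add_comm]

/-- Chain rule for the Laplacian of `ψ ∘ g`: the complex Hessian of `ψ` on the derivative of `g`,
plus `dψ` on the vector-valued Laplacian of `g`. -/
lemma lap_comp {ψ : E → ℝ} {g : ℂ → E} {w : ℂ} (hψ : ContDiff ℝ 2 ψ)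
    (hg : ContDiffAt ℝ 2 g w) :
    lap (fun x => ψ (g x)) w =
      fderiv ℝ (fderiv ℝ ψ) (g w) (fderiv ℝ g w 1) (fderiv ℝ g w 1) +
      fderiv ℝ (fderiv ℝ ψ) (g w) (fderiv ℝ g w I) (fderiv ℝ g w I) +
        fderiv ℝ ψ (g w) (fderiv ℝ (fderiv ℝ g) w 1 1 + fderiv ℝ (fderiv ℝ g) w I I) := by
  rw [lap, fderiv_fderiv_comp hψ hg, fderiv_fderiv_comp hψ hg, map_add]
  ring

/-- Solutions of the Cauchy–Riemann equation are harmonic. -/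
lemma laplacian_eq_zero_of_cauchyRiemann [NormedSpace ℂ E] [IsScalarTower ℝ ℂ E]
    {g : ℂ → E} {w : ℂ}
    (hg : ContDiffAt ℝ 2 g w) (hCR : ∀ᶠ z in 𝓝 w, fderiv ℝ g z I = I • fderiv ℝ g z 1) :
    fderiv ℝ (fderiv ℝ g) w 1 1 + fderiv ℝ (fderiv ℝ g) w I I = 0 := by
  have key : ∀ η : ℂ, fderiv ℝ (fderiv ℝ g) w η I = I • fderiv ℝ (fderiv ℝ g) w η 1 := by
    intro η
    have hev : (fun z => fderiv ℝ g z I) =ᶠ[𝓝 w] fun z => I • fderiv ℝ g z 1 := hCR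
    have h2 := ((hasFDerivAt_fderiv hg).clm_apply (hasFDerivAt_const (1 : ℂ) w)).fun_const_smul I
    rw [← fderiv_fderiv_apply hg, hev.fderiv_eq, h2.fderiv]
    simp
  rw [key I, fderiv_fderiv_symm hg I 1, key 1, smul_smul, I_mul_I]
  simp

lemma lap_affine [NormedSpace ℂ E] [IsScalarTower ℝ ℂ E] {ψ : E → ℝ}
    (hψ : ContDiff ℝ 2 ψ) (z v : E) :
    lap (fun ζ => ψ (z + ζ • v)) 0 =
      fderiv ℝ (fderiv ℝ ψ) z v v + fderiv ℝ (fderiv ℝ ψ) z (I • v) (I • v) := by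
  have hD : ∀ x : ℂ, HasFDerivAt (fun ζ : ℂ => z + ζ • v)
      ((ContinuousLinearMap.id ℝ ℂ).smulRight v) x := fun x =>
    ((ContinuousLinearMap.id ℝ ℂ).smulRight v).hasFDerivAt.const_add z
  have hg : ContDiffAt ℝ 2 (fun ζ : ℂ => z + ζ • v) 0 :=
    contDiffAt_const.add ((ContinuousLinearMap.id ℝ ℂ).smulRight v).contDiff.contDiffAt
  have hconst : fderiv ℝ (fun ζ : ℂ => z + ζ • v) =
      fun _ => (ContinuousLinearMap.id ℝ ℂ).smulRight v := funext fun x => (hD x).fderiv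
  rw [lap_comp hψ hg, hconst]
  simp

/-- If `da = df + db ∘ i` near `w`, then `Δa = Δf` at `w`, because `d(db ∘ i)` contributes the
commutator of the second partial derivatives of `b`. -/
lemma lap_eq_lap_of_conjugate {a b f : ℂ → ℝ} {w : ℂ}
    (hf : ContDiffAt ℝ 2 f w) (hb : ContDiffAt ℝ 2 b w)
    (hab : ∀ᶠ z in 𝓝 w, ∀ ζ, fderiv ℝ a z ζ = fderiv ℝ f z ζ + fderiv ℝ b z (I * ζ)) :
    lap a w = lap f w := by
  have key : ∀ ζ η : ℂ, fderiv ℝ (fun z => fderiv ℝ a z ζ) w η =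
      fderiv ℝ (fderiv ℝ f) w η ζ + fderiv ℝ (fderiv ℝ b) w η (I * ζ) := by
    intro ζ η
    have hev : (fun z => fderiv ℝ a z ζ) =ᶠ[𝓝 w]
        fun z => fderiv ℝ f z ζ + fderiv ℝ b z (I * ζ) := hab.mono fun z hz => hz ζ
    have h1 := (hasFDerivAt_fderiv hf).clm_apply (hasFDerivAt_const ζ w)
    have h2 := (hasFDerivAt_fderiv hb).clm_apply (hasFDerivAt_const (I * ζ) w)
    rw [hev.fderiv_eq, (h1.fun_add h2).fderiv]
    simp
  rw [lap, lap, key, key, fderiv_fderiv_apply hf, fderiv_fderiv_apply hf, mul_one, I_mul_I,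
    map_neg, fderiv_fderiv_symm hb 1 I]
  ring

end Auxiliary

/-- For a `J`-holomorphic map `u = (a, b, h)` into the symplectisation of the
contactisation of a plurisubharmonic `(ℂⁿ, ψ)`: (i) `h` is holomorphic;
(ii) `u` pulls back the contact form `db + λ` to `−da ∘ i`; (iii) `a` is
subharmonic. -/
theorem Jholomorphic_properties (n : ℕ) (ψ : (Fin n → ℂ) → ℝ)
    (hψ : ContDiff ℝ (⊤ : ℕ∞) ψ)
    (hpsh : ∀ (z v : Fin n → ℂ), 0 ≤ lap (fun ζ => ψ (z + ζ • v)) 0)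
    (U : Set ℂ) (hU : IsOpen U)
    (a b : ℂ → ℝ) (h : ℂ → Fin n → ℂ)
    (u : ℂ → ℝ × ℝ × (Fin n → ℂ))
    (hu : ∀ w, u w = (a w, b w, h w))
    (hreg : ContDiffOn ℝ 2 u U)
    (hJ : ∀ w ∈ U, ∀ ζ : ℂ,
      fderiv ℝ u w (Complex.I * ζ) = Jstd n ψ (h w) (fderiv ℝ u w ζ)) :
    (∀ w ∈ U, DifferentiableAt ℂ h w) ∧
    (∀ w ∈ U, ∀ ζ : ℂ,
      fderiv ℝ b w ζ + lamStd n ψ (h w) (fderiv ℝ h w ζ) =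
        -(fderiv ℝ a w (Complex.I * ζ))) ∧
    (∀ w ∈ U, 0 ≤ lap a w) := by
  have hψ2 : ContDiff ℝ 2 ψ := contDiff_infty.1 hψ 2
  obtain rfl : u = fun w => (a w, b w, h w) := funext hu
  have hC : ∀ w ∈ U, ContDiffAt ℝ 2 (fun w => (a w, b w, h w)) w := fun w hw =>
    hreg.contDiffAt (hU.mem_nhds hw)
  have hCa : ∀ w ∈ U, ContDiffAt ℝ 2 a w := fun w hw => (hC w hw).fst
  have hCb : ∀ w ∈ U, ContDiffAt ℝ 2 b w := fun w hw => (hC w hw).snd.fst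
  have hCh : ∀ w ∈ U, ContDiffAt ℝ 2 h w := fun w hw => (hC w hw).snd.snd
  have hD : ∀ w ∈ U, ∀ ζ : ℂ, fderiv ℝ (fun w => (a w, b w, h w)) w ζ =
      (fderiv ℝ a w ζ, fderiv ℝ b w ζ, fderiv ℝ h w ζ) := by
    intro w hw ζ
    have h1 := ((hCa w hw).differentiableAt (by norm_num)).hasFDerivAt
    have h2 := ((hCb w hw).differentiableAt (by norm_num)).hasFDerivAt
    have h3 := ((hCh w hw).differentiableAt (by norm_num)).hasFDerivAt
    rw [(h1.prodMk (h2.prodMk h3)).fderiv]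
    rfl
  have hJ' : ∀ w ∈ U, ∀ ζ : ℂ,
      fderiv ℝ a w (I * ζ) = fderiv ℝ ψ (h w) (I • fderiv ℝ h w ζ) - fderiv ℝ b w ζ ∧
      fderiv ℝ b w (I * ζ) = fderiv ℝ a w ζ - fderiv ℝ ψ (h w) (fderiv ℝ h w ζ) ∧
      fderiv ℝ h w (I * ζ) = I • fderiv ℝ h w ζ := by
    intro w hw ζ
    have := hJ w hw ζ
    rw [hD w hw, hD w hw] at this
    simpa only [Jstd, Prod.mk.injEq] using this
  have hCR : ∀ w ∈ U, fderiv ℝ h w I = I • fderiv ℝ h w 1 := fun w hw => by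
    simpa using (hJ' w hw 1).2.2
  refine ⟨fun w hw => ?_, fun w hw ζ => ?_, fun w hw => ?_⟩
  · exact differentiableAt_complex_iff_differentiableAt_real.2
      ⟨(hCh w hw).differentiableAt (by norm_num), hCR w hw⟩
  · rw [lamStd, (hJ' w hw ζ).1]
    ring
  · have hUw : ∀ᶠ z in 𝓝 w, z ∈ U := hU.mem_nhds hw
    have hψh : ContDiffAt ℝ 2 (fun z => ψ (h z)) w :=
      (hψ2.contDiffAt (x := h w)).comp w (hCh w hw)
    have hab : ∀ᶠ z in 𝓝 w, ∀ ζ, fderiv ℝ a z ζ =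
        fderiv ℝ (fun z => ψ (h z)) z ζ + fderiv ℝ b z (I * ζ) := by
      filter_upwards [hUw] with z hz ζ
      have h1 : HasFDerivAt (fun z => ψ (h z)) _ z :=
        (hψ2.differentiable (by norm_num) (h z)).hasFDerivAt.comp z
          ((hCh z hz).differentiableAt (by norm_num)).hasFDerivAt
      rw [h1.fderiv, (hJ' z hz ζ).2.1]
      simp
    rw [lap_eq_lap_of_conjugate hψh (hCb w hw) hab, lap_comp hψ2 (hCh w hw),
      laplacian_eq_zero_of_cauchyRiemann (hCh w hw) (hUw.mono hCR), map_zero, add_zero, hCR w hw,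
      ← lap_affine hψ2]
    exact hpsh _ _
end

section
/- Let n = 1 and ψ : ℂ → ℝ, ψ(z) = (Re z)²/2, with associated almost complex structure J on ℝ × ℝ × ℂ, and fix b₀ ∈ ℝ. Then the map u : 𝔻 → ℝ × ℝ × ℂ defined by u(w) = ( (|w|² − 1)/4, b₀ − (Re w)(Im w)/2, w ) is J-holomorphic on the open unit disc, its first component vanishes on the unit circle, and the associated function w ↦ (|w|² − 1)/4 − (Re w)²/2 + i·(b₀ − (Re w)(Im w)/2) equals the holomorphic function w ↦ −(w² + 1)/4 + i·b₀. -/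
/-!
The differential of `ψ(z) = (Re z)²/2` at `z` is `v ↦ (Re z)(Re v)` (`hasFDerivAt_psiEH`), and at
`w = x + iy` the differential of the disc is
`ζ = s + it ↦ ((xs + yt)/2, -(xt + ys)/2, ζ)` (`hasFDerivAt_discEH`). Replacing `(s, t)` by `(-t, s)`
turns the Cauchy-Riemann equation `Du_w(iζ) = J_w(Du_w(ζ))` into a pair of polynomial identities in
`x, y, s, t`. The same holds for the formula for the associated holomorphic function, after separating
real and imaginary parts.
-/

open Complex Metric

/-- The potential `ψ(z) = (Re z)²/2` on `ℂ` (the case `n = 1`). -/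
noncomputable def psiEH (z : ℂ) : ℝ := z.re ^ 2 / 2

/-- The associated almost complex structure `J` on `ℝ × ℝ × ℂ`:
`J_z (α, β, v) = (dψ_z(i·v) − β, α − dψ_z(v), i·v)`. -/
noncomputable def JEH (z : ℂ) (q : ℝ × ℝ × ℂ) : ℝ × ℝ × ℂ :=
  (fderiv ℝ psiEH z (Complex.I * q.2.2) - q.2.1,
   q.1 - fderiv ℝ psiEH z q.2.2,
   Complex.I * q.2.2)

theorem hasFDerivAt_psiEH (z : ℂ) : HasFDerivAt psiEH (z.re • reCLM) z := by
  have h : HasFDerivAt (fun z : ℂ => z.re) reCLM z := reCLM.hasFDerivAt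
  refine ((h.mul h).mul_const (1 / 2 : ℝ)).congr_fderiv ?_ |>.congr_of_eventuallyEq ?_
  · ext v <;> simp; ring
  · exact Filter.Eventually.of_forall fun z => by simp [psiEH]; ring

theorem hasFDerivAt_discEH (b₀ : ℝ) (w : ℂ) :
    HasFDerivAt (fun w : ℂ => (((normSq w - 1) / 4, b₀ - w.re * w.im / 2, w) : ℝ × ℝ × ℂ))
      (((1 / 2 : ℝ) • (w.re • reCLM + w.im • imCLM)).prod
        ((-(1 / 2 : ℝ) • (w.re • imCLM + w.im • reCLM)).prod (ContinuousLinearMap.id ℝ ℂ))) w := by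
  have hre : HasFDerivAt (fun z : ℂ => z.re) reCLM w := reCLM.hasFDerivAt
  have him : HasFDerivAt (fun z : ℂ => z.im) imCLM w := imCLM.hasFDerivAt
  refine HasFDerivAt.prodMk ?_ (HasFDerivAt.prodMk ?_ (hasFDerivAt_id w))
  · refine ((((hre.mul hre).add (him.mul him)).sub_const 1).mul_const
      (1 / 4 : ℝ)).congr_fderiv ?_ |>.congr_of_eventuallyEq ?_
    · ext v <;> simp; ring
    · exact Filter.Eventually.of_forall fun z => by simp [normSq_apply]; ring
  · refine (((hre.mul him).mul_const (1 / 2 : ℝ)).const_sub b₀).congr_fderiv ?_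
      |>.congr_of_eventuallyEq ?_
    · ext v <;> simp; ring
    · exact Filter.Eventually.of_forall fun z => by simp; ring

/-- The explicit disc of Eliashberg–Hofer:
`u(w) = ((|w|² − 1)/4, b₀ − (Re w)(Im w)/2, w)` is `J`-holomorphic for the
potential `ψ(z) = (Re z)²/2`, its first component vanishes on the unit circle,
and the associated function `a − ψ ∘ h + i·b` is the holomorphic function
`w ↦ −(w² + 1)/4 + i·b₀`. -/
theorem eliashberg_hofer_disc (b₀ : ℝ)
    (u : ℂ → ℝ × ℝ × ℂ)
    (hu : ∀ w, u w = ((Complex.normSq w - 1) / 4, b₀ - w.re * w.im / 2, w)) :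
    (∀ w ∈ ball (0 : ℂ) 1,
      DifferentiableAt ℝ u w ∧
      ∀ ζ : ℂ, fderiv ℝ u w (Complex.I * ζ) = JEH w (fderiv ℝ u w ζ)) ∧
    (∀ w : ℂ, ‖w‖ = 1 → (Complex.normSq w - 1) / 4 = 0) ∧
    (∀ w : ℂ,
      (((Complex.normSq w - 1) / 4 - w.re ^ 2 / 2 : ℝ) : ℂ)
          + Complex.I * ((b₀ - w.re * w.im / 2 : ℝ) : ℂ)
        = -(w ^ 2 + 1) / 4 + Complex.I * (b₀ : ℂ)) := by
  obtain rfl : u = _ := funext hu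
  refine ⟨fun w _ => ⟨(hasFDerivAt_discEH b₀ w).differentiableAt, fun ζ => ?_⟩, fun w hw => ?_,
    fun w => ?_⟩
  · rw [(hasFDerivAt_discEH b₀ w).fderiv, JEH, (hasFDerivAt_psiEH w).fderiv]
    refine Prod.ext ?_ (Prod.ext ?_ ?_)
    · simp; ring
    · simp; ring
    · simp
  · rw [normSq_eq_norm_sq, hw]
    norm_num
  · have h4 : (4 : ℂ) = ((4 : ℝ) : ℂ) := by norm_num
    rw [h4]
    apply Complex.ext
    · simp only [add_re, mul_re, I_re, I_im, ofReal_re, ofReal_im, div_ofReal_re, neg_re, add_re, add_im,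
        one_re, pow_two, normSq_apply, mul_re, mul_im]
      ring
    · simp only [add_im, mul_im, I_re, I_im, ofReal_re, ofReal_im, div_ofReal_im, neg_im, add_re, add_im,
        one_im, pow_two, normSq_apply, mul_re, mul_im]
      ring
end
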